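/- For the sequence {x_n} generated by Algorithm 2, one has lim_{n→∞} ‖x_{n+1} − x_n‖/λ_n = 0 and lim_{n→∞} ‖x_{n+1} − x_n‖ = 0. -/

import Mathlib

open Filter Topology

lemma aux_xu (a α ε : ℕ → ℝ) (ha : ∀ n, 0 ≤ a n) (hα : ∀ n, 0 < α n ∧ α n ≤ 1)
    (hs : ¬ Summable α) (hε : Tendsto ε atTop (𝓝 0))
    (hrec : ∀ᶠ n in atTop, a (n+1) ≤ (1 - α (n+1)) * a n + α (n+1) * ε n) :
    Tendsto a atTop (𝓝 0) := by
  rw [Metric.tendsto_atTop]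
  intro e he
  have h1 : ∀ᶠ n in atTop, ε n < e / 2 := hε.eventually (gt_mem_nhds (by linarith))
  obtain ⟨N, hN⟩ := eventually_atTop.1 (hrec.and h1)
  have hdecay : ∀ k, a (N + k) - e / 2 ≤
      Real.exp (-∑ j ∈ Finset.range k, α (j + (N + 1))) * |a N - e / 2| := by
    intro k
    induction k with
    | zero => simpa using le_abs_self (a N - e / 2)
    | succ k ih =>
      obtain ⟨h2, h3⟩ := hN (N + k) (by omega)
      have hα' := hα (N + k + 1)
      have h4 : a (N + k + 1) - e / 2 ≤ (1 - α (N + k + 1)) * (a (N + k) - e / 2) := by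
        nlinarith
      have h5 : (1 - α (N + k + 1)) * (a (N + k) - e / 2) ≤
          (1 - α (N + k + 1)) *
          (Real.exp (-∑ j ∈ Finset.range k, α (j + (N + 1))) * |a N - e / 2|) :=
        mul_le_mul_of_nonneg_left ih (by linarith)
      have h6 : 1 - α (N + k + 1) ≤ Real.exp (-α (N + k + 1)) := by
        have := Real.add_one_le_exp (-α (N + k + 1)); linarith
      have h7 := mul_le_mul_of_nonneg_right h6 (by positivity :
        0 ≤ Real.exp (-∑ j ∈ Finset.range k, α (j + (N + 1))) * |a N - e / 2|)
      rw [Finset.sum_range_succ, neg_add, Real.exp_add]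
      have h8 : k + (N + 1) = N + k + 1 := by ring
      rw [h8, ← add_assoc N k 1]
      linarith
  have hs' : ¬ Summable (fun j => α (j + (N + 1))) := by
    rwa [summable_nat_add_iff]
  have ht := (not_summable_iff_tendsto_nat_atTop_of_nonneg
    (fun j => (hα (j + (N + 1))).1.le)).1 hs'
  have ht2 : Tendsto (fun k => Real.exp (-∑ j ∈ Finset.range k, α (j + (N + 1))) * |a N - e / 2|)
      atTop (𝓝 0) := by
    have := (Real.tendsto_exp_neg_atTop_nhds_zero.comp ht).mul_const |a N - e / 2|
    simpa using this
  obtain ⟨K, hK⟩ := eventually_atTop.1 (ht2.eventually (gt_mem_nhds (half_pos he)))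
  refine ⟨N + K, fun n hn => ?_⟩
  obtain ⟨m, rfl⟩ := Nat.exists_eq_add_of_le hn
  have h9 := hK (K + m) (by omega)
  have h10 := hdecay (K + m)
  rw [Real.dist_eq, sub_zero, abs_of_nonneg (ha _), add_assoc]
  linarith

lemma aux_line {H : Type*} [NormedAddCommGroup H] [InnerProductSpace ℝ H] [CompleteSpace H]
    (h : H → ℝ) (h' : H → H) (hg : ∀ x, HasGradientAt h (h' x) x) (x v : H) (t : ℝ) :
    HasDerivAt (fun t : ℝ => h (x + t • v)) (inner ℝ (h' (x + t • v)) v) t := by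
  have h1 : HasDerivAt (fun t : ℝ => x + t • v) v t := by
    simpa using ((hasDerivAt_id t).smul_const v).const_add x
  have h2 := (hg (x + t • v)).hasFDerivAt.comp_hasDerivAt t h1
  rw [InnerProductSpace.toDual_apply_apply] at h2
  exact h2

lemma aux_grad_ineq {H : Type*} [NormedAddCommGroup H] [InnerProductSpace ℝ H] [CompleteSpace H]
    (h : H → ℝ) (h' : H → H) (hc : ConvexOn ℝ Set.univ h) (hg : ∀ x, HasGradientAt h (h' x) x)
    (x y : H) : h x + inner ℝ (h' x) (y - x) ≤ h y := by
  have hd := aux_line h h' hg x (y - x) 0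
  have hconv : ConvexOn ℝ Set.univ (fun t : ℝ => h (x + t • (y - x))) := by
    refine ⟨convex_univ, fun s _ t _ a b ha hb hab => ?_⟩
    have := hc.2 (Set.mem_univ (x + s • (y - x))) (Set.mem_univ (x + t • (y - x))) ha hb hab
    convert this using 2
    have hb' : b = 1 - a := by linarith
    subst hb'
    simp only [smul_eq_mul]
    module
  have := hconv.le_slope_of_hasDerivAt (Set.mem_univ 0) (Set.mem_univ 1) one_pos hd
  simp [slope_def_field] at this
  linarith

lemma aux_descent {H : Type*} [NormedAddCommGroup H] [InnerProductSpace ℝ H] [CompleteSpace H]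
    (h : H → ℝ) (h' : H → H) (K : ℝ) (hg : ∀ x, HasGradientAt h (h' x) x)
    (hl : ∀ x y, ‖h' x - h' y‖ ≤ K * ‖x - y‖)
    (x v : H) : h (x + v) ≤ h x + inner ℝ (h' x) v + K / 2 * ‖v‖ ^ 2 := by
  have hd : ∀ t : ℝ, HasDerivAt
      (fun t : ℝ => h (x + t • v) - (t * inner ℝ (h' x) v + K / 2 * ‖v‖ ^ 2 * t ^ 2))
      (inner ℝ (h' (x + t • v)) v - (1 * inner ℝ (h' x) v + K / 2 * ‖v‖ ^ 2 * (2 * t))) t := by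
    intro t
    refine (aux_line h h' hg x v t).sub (((hasDerivAt_id t).mul_const _).add ?_)
    simpa using (hasDerivAt_pow 2 t).const_mul (K / 2 * ‖v‖ ^ 2)
  have hanti := antitoneOn_of_deriv_nonpos (convex_Icc (0:ℝ) 1)
    (fun t _ => (hd t).continuousAt.continuousWithinAt)
    (fun t _ => (hd t).differentiableAt.differentiableWithinAt)
    (fun t ht => by
      rw [(hd t).deriv]
      rw [interior_Icc] at ht
      have h1 : inner ℝ (h' (x + t • v) - h' x) v ≤ ‖h' (x + t • v) - h' x‖ * ‖v‖ :=
        real_inner_le_norm _ _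
      rw [inner_sub_left] at h1
      have h2 := hl (x + t • v) x
      rw [add_sub_cancel_left, norm_smul, Real.norm_of_nonneg ht.1.le] at h2
      have h3 := mul_le_mul_of_nonneg_right h2 (norm_nonneg v)
      nlinarith)
  have := hanti (Set.left_mem_Icc.2 zero_le_one) (Set.right_mem_Icc.2 zero_le_one) zero_le_one
  simp at this
  linarith

lemma aux_half {H : Type*} [NormedAddCommGroup H] [InnerProductSpace ℝ H] [CompleteSpace H]
    (h : H → ℝ) (h' : H → H) (L : ℝ) (hL : 0 < L) (hc : ConvexOn ℝ Set.univ h)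
    (hg : ∀ x, HasGradientAt h (h' x) x)
    (hl : ∀ x y, ‖h' x - h' y‖ ≤ (1 / L) * ‖x - y‖) (x y : H) :
    h x + inner ℝ (h' x) (y - x) + L / 2 * ‖h' y - h' x‖ ^ 2 ≤ h y := by
  have h1 := aux_descent h h' (1 / L) hg hl y (-(L • (h' y - h' x)))
  have h2 := aux_grad_ineq h h' hc hg x (y + -(L • (h' y - h' x)))
  have e1 : 1 / L / 2 * ‖-(L • (h' y - h' x))‖ ^ 2 = L / 2 * ‖h' y - h' x‖ ^ 2 := by
    rw [norm_neg, norm_smul, Real.norm_of_nonneg hL.le]; field_simp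
  have e2 : y + -(L • (h' y - h' x)) - x = (y - x) - L • (h' y - h' x) := by abel
  rw [e1, inner_neg_right, inner_smul_right] at h1
  rw [e2, inner_sub_right (h' x), inner_smul_right] at h2
  have e3 : inner ℝ (h' y) (h' y - h' x) - inner ℝ (h' x) (h' y - h' x) = ‖h' y - h' x‖ ^ 2 := by
    rw [← inner_sub_left, real_inner_self_eq_norm_sq]
  have e4 : L * inner ℝ (h' y) (h' y - h' x) = L * inner ℝ (h' x) (h' y - h' x) +
    L * ‖h' y - h' x‖ ^ 2 := by rw [← e3]; ring
  linarith

lemma aux_nonexp {H : Type*} [NormedAddCommGroup H] [InnerProductSpace ℝ H] [CompleteSpace H]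
    (h : H → ℝ) (h' : H → H) (L : ℝ) (hL : 0 < L) (hc : ConvexOn ℝ Set.univ h)
    (hg : ∀ x, HasGradientAt h (h' x) x)
    (hl : ∀ x y, ‖h' x - h' y‖ ≤ (1 / L) * ‖x - y‖) (l : ℝ) (hl0 : 0 < l) (hl2 : l ≤ 2 * L)
    (x y : H) : ‖(x - y) - l • (h' x - h' y)‖ ≤ ‖x - y‖ := by
  have h1 := aux_half h h' L hL hc hg hl x y
  have h2 := aux_half h h' L hL hc hg hl y x
  have e1 : inner ℝ (h' x) (y - x) = - inner ℝ (h' x) (x - y) := by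
    rw [← inner_neg_right, neg_sub]
  rw [e1, norm_sub_rev] at h1
  have e2 : inner ℝ (h' x - h' y) (x - y) = inner ℝ (h' x) (x - y) - inner ℝ (h' y) (x - y) :=
    inner_sub_left _ _ _
  have h3 : L * ‖h' x - h' y‖ ^ 2 ≤ inner ℝ (h' x - h' y) (x - y) := by rw [e2]; linarith
  refine le_of_sq_le_sq ?_ (norm_nonneg _)
  rw [norm_sub_sq_real, inner_smul_right, norm_smul, Real.norm_of_nonneg hl0.le,
    real_inner_comm]
  have h4 := mul_le_mul_of_nonneg_left h3 hl0.le
  have h5 := mul_le_mul_of_nonneg_right hl2 (mul_nonneg hl0.le (sq_nonneg ‖h' x - h' y‖))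
  nlinarith

lemma aux_prox {H : Type*} [NormedAddCommGroup H] [InnerProductSpace ℝ H]
    (f : H → ℝ) (hc : ConvexOn ℝ Set.univ f) (l : ℝ) (hl : 0 < l) (v y : H)
    (hy : ∀ w, f y + (1 / (2 * l)) * ‖v - y‖ ^ 2 ≤ f w + (1 / (2 * l)) * ‖v - w‖ ^ 2) (w : H) :
    inner ℝ (v - y) (w - y) ≤ l * (f w - f y) := by
  have key : ∀ t : ℝ, 0 < t → t ≤ 1 →
      inner ℝ (v - y) (w - y) ≤ l * (f w - f y) + t * (‖w - y‖ ^ 2 / 2) := by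
    intro t h0 h1
    have a1 := hy ((1 - t) • y + t • w)
    have a2 := hc.2 (Set.mem_univ y) (Set.mem_univ w) (by linarith : 0 ≤ 1 - t) h0.le (by ring)
    have e : v - ((1 - t) • y + t • w) = (v - y) - t • (w - y) := by module
    rw [e, norm_sub_sq_real (v - y), inner_smul_right, norm_smul, Real.norm_of_nonneg h0.le] at a1
    simp only [smul_eq_mul] at a2
    have a3 : 0 ≤ t * (f w - f y) +
        (1 / (2 * l)) * (- 2 * (t * inner ℝ (v - y) (w - y)) + (t * ‖w - y‖) ^ 2) := by
      linarith
    have a4 := mul_nonneg (by positivity : 0 ≤ l / t) a3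
    have e2 : l / t * (t * (f w - f y) +
        (1 / (2 * l)) * (- 2 * (t * inner ℝ (v - y) (w - y)) + (t * ‖w - y‖) ^ 2)) =
        l * (f w - f y) - inner ℝ (v - y) (w - y) + t * (‖w - y‖ ^ 2 / 2) := by
      field_simp; ring
    linarith
  refine le_of_forall_pos_le_add fun e he => ?_
  have hC : 0 < ‖w - y‖ ^ 2 / 2 + 1 := by positivity
  have k := key (min 1 (e / (‖w - y‖ ^ 2 / 2 + 1))) (by positivity) (min_le_left _ _)
  have k2 : min 1 (e / (‖w - y‖ ^ 2 / 2 + 1)) * (‖w - y‖ ^ 2 / 2) ≤ e := by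
    calc _ ≤ e / (‖w - y‖ ^ 2 / 2 + 1) * (‖w - y‖ ^ 2 / 2 + 1) :=
          mul_le_mul (min_le_right _ _) (by linarith) (by positivity) (by positivity)
      _ = e := by field_simp
  linarith

lemma aux_prox2 {H : Type*} [NormedAddCommGroup H] [InnerProductSpace ℝ H]
    (f : H → ℝ) (hc : ConvexOn ℝ Set.univ f) (l l' : ℝ) (hl : 0 < l) (hl' : 0 < l') (v y v' y' : H)
    (hy : ∀ w, f y + (1 / (2 * l)) * ‖v - y‖ ^ 2 ≤ f w + (1 / (2 * l)) * ‖v - w‖ ^ 2)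
    (hy' : ∀ w, f y' + (1 / (2 * l')) * ‖v' - y'‖ ^ 2 ≤ f w + (1 / (2 * l')) * ‖v' - w‖ ^ 2) :
    ‖y' - y‖ ≤ ‖v' - (l' / l) • v - (1 - l' / l) • y‖ := by
  have h1 := aux_prox f hc l hl v y hy y'
  have h2 := aux_prox f hc l' hl' v' y' hy' y
  have h3 := mul_le_mul_of_nonneg_left h1 (by positivity : 0 ≤ l' / l)
  have e1 : l' / l * (l * (f y' - f y)) = l' * (f y' - f y) := by field_simp
  have e2 : inner ℝ (v' - y') (y - y') = - inner ℝ (v' - y') (y' - y) := by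
    rw [← inner_neg_right, neg_sub]
  rw [e1] at h3
  rw [e2] at h2
  have e3 : v' - (l' / l) • v - (1 - l' / l) • y =
      (v' - y') - (l' / l) • (v - y) + (y' - y) := by module
  have h4 : ‖y' - y‖ ^ 2 ≤ inner ℝ (v' - (l' / l) • v - (1 - l' / l) • y) (y' - y) := by
    rw [e3, inner_add_left, inner_sub_left, real_inner_smul_left, real_inner_self_eq_norm_sq]
    linarith
  have h5 := h4.trans (real_inner_le_norm _ _)
  by_contra hlt
  push Not at hlt
  nlinarith [norm_nonneg (v' - (l' / l) • v - (1 - l' / l) • y), norm_nonneg (y' - y)]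

lemma aux_unif (s : Finset ℕ) (F : ℕ → ℕ → ℝ)
    (hF : ∀ i ∈ s, ∃ C, ∀ᶠ n in atTop, F n i ≤ C) :
    ∃ C, 0 ≤ C ∧ ∀ᶠ n in atTop, ∀ i ∈ s, F n i ≤ C := by
  choose! C hC using hF
  refine ⟨∑ i ∈ s, |C i|, Finset.sum_nonneg fun _ _ => abs_nonneg _, ?_⟩
  rw [Filter.eventually_all_finset]
  intro i hi
  filter_upwards [hC i hi] with n hn
  exact hn.trans ((le_abs_self _).trans
    (Finset.single_le_sum (f := fun i => |C i|) (fun _ _ => abs_nonneg _) hi))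


theorem alg2_successive_differences_tendsto_zero
    {H : Type*} [NormedAddCommGroup H] [InnerProductSpace ℝ H] [CompleteSpace H]
    (M : ℕ) (hM : 1 ≤ M)
    (f h : ℕ → H → ℝ) (h' : ℕ → H → H) (L : ℕ → ℝ) (T : ℕ → H → H)
    (hf_cont : ∀ i ∈ Finset.Icc 1 M, Continuous (f i))
    (hf_conv : ∀ i ∈ Finset.Icc 1 M, ConvexOn ℝ Set.univ (f i))
    (hh_conv : ∀ i ∈ Finset.Icc 1 M, ConvexOn ℝ Set.univ (h i))
    (hh_grad : ∀ i ∈ Finset.Icc 1 M, ∀ x : H, HasGradientAt (h i) (h' i x) x)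
    (hL_pos : ∀ i ∈ Finset.Icc 1 M, 0 < L i)
    (hh_lip : ∀ i ∈ Finset.Icc 1 M, ∀ x y : H, ‖h' i x - h' i y‖ ≤ (1 / L i) * ‖x - y‖)
    (hT_firm : ∀ i ∈ Finset.Icc 1 M, ∀ x y : H,
      ‖T i x - T i y‖ ^ 2 ≤ @inner ℝ H _ (T i x - T i y) (x - y))
    (S : Set H) (hS : S = ⋂ i ∈ Finset.Icc 1 M, {x : H | T i x = x}) (hS_ne : S.Nonempty)
    (θ lam β α : ℕ → ℝ) (σ : ℝ) (hσ : 1 ≤ σ)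
    (hθ_range : ∀ n, 0 ≤ θ n ∧ θ n < 1)
    (hlam_pos : ∀ n, 0 < lam n)
    (hlam_le : ∀ n, ∀ i ∈ Finset.Icc 1 M, lam n ≤ 2 * L i)
    (hβ_range : ∀ n, 0 < β n ∧ β n ≤ 1)
    (hα_range : ∀ n, 0 < α n ∧ α n ≤ 1)
    (hθ_anti : Antitone θ) (hlam_anti : Antitone lam)
    (hβ_anti : Antitone β) (hα_anti : Antitone α)
    (hθ_lim : Tendsto θ atTop (𝓝 0)) (hlam_lim : Tendsto lam atTop (𝓝 0))
    (hβ_lim : Tendsto β atTop (𝓝 0)) (hα_lim : Tendsto α atTop (𝓝 0))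
    (hC1 : ¬ Summable α)
    (hC2 : Tendsto (fun n => (1 / α (n+1)) * |1 / lam (n+1) - 1 / lam n|) atTop (𝓝 0))
    (hC3 : Tendsto (fun n => (1 / lam (n+1)) * |1 - α n / α (n+1)|) atTop (𝓝 0))
    (hC4 : Tendsto (fun n => α n / lam n) atTop (𝓝 0))
    (hC5 : Tendsto (fun n => θ n / (α (n+1) * lam (n+1))) atTop (𝓝 0))
    (hC6 : ∀ n, lam n / lam (n+1) ≤ σ)
    (hC7 : Tendsto (fun n => β n / α (n+1)) atTop (𝓝 0))
    (x z : ℕ → H) (w y d : ℕ → ℕ → H) (u : ℕ → H)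
    (hd1 : ∀ i ∈ Finset.Icc 1 M, d 1 i = -(h' i (z 0)))
    (hz : ∀ n ≥ 1, z n = x n + θ n • (x n - x (n-1)))
    (hd : ∀ n ≥ 1, ∀ i ∈ Finset.Icc 1 M, d (n+1) i = -(h' i (z n)) + β n • d n i)
    (hy : ∀ n ≥ 1, ∀ i ∈ Finset.Icc 1 M, ∀ v : H,
      f i (y n i) + (1 / (2 * lam n)) * ‖z n + lam n • d (n+1) i - y n i‖ ^ 2
        ≤ f i v + (1 / (2 * lam n)) * ‖z n + lam n • d (n+1) i - v‖ ^ 2)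
    (hw : ∀ n ≥ 1, ∀ i ∈ Finset.Icc 1 M,
      w n (i+1) = α n • u i + (1 - α n) • T i (y n i))
    (hx : ∀ n ≥ 1, x (n+1) = (M : ℝ)⁻¹ • ∑ i ∈ Finset.Icc 1 M, w n (i+1))
    (hy_bdd : ∀ i ∈ Finset.Icc 1 M, ∃ C, ∀ n ≥ 1, ‖y n i‖ ≤ C)
    : Tendsto (fun n => ‖x (n+1) - x n‖ / lam n) atTop (𝓝 0) ∧
      Tendsto (fun n => ‖x (n+1) - x n‖) atTop (𝓝 0) := by
  have hFne : ∀ i ∈ Finset.Icc 1 M, ∀ a b : H, ‖T i a - T i b‖ ≤ ‖a - b‖ := by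
    intro i hi a b
    have h1 := (hT_firm i hi a b).trans (real_inner_le_norm _ _)
    by_contra hlt
    push Not at hlt
    nlinarith [norm_nonneg (a - b), norm_nonneg (T i a - T i b)]
  have hMpos : (0 : ℝ) < M := by exact_mod_cast hM
  -- average bound
  have havg : ∀ (g : ℕ → H) (B : ℝ), (∀ i ∈ Finset.Icc 1 M, ‖g i‖ ≤ B) →
      ‖(M : ℝ)⁻¹ • ∑ i ∈ Finset.Icc 1 M, g i‖ ≤ B := by
    intro g B hg
    rw [norm_smul, Real.norm_of_nonneg (inv_nonneg.2 hMpos.le)]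
    have h1 : ‖∑ i ∈ Finset.Icc 1 M, g i‖ ≤ M * B := by
      refine (norm_sum_le_of_le _ hg).trans ?_
      simp
    calc (M : ℝ)⁻¹ * ‖∑ i ∈ Finset.Icc 1 M, g i‖ ≤ (M : ℝ)⁻¹ * (M * B) := by gcongr
      _ = B := by field_simp
  -- boundedness of y
  obtain ⟨Cy, hCy0, hCy⟩ := aux_unif (Finset.Icc 1 M) (fun n i => ‖y n i‖) (fun i hi => by
    obtain ⟨C, hC⟩ := hy_bdd i hi
    exact ⟨C, eventually_atTop.2 ⟨1, hC⟩⟩)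
  obtain ⟨CT, hCT0, hCT⟩ := aux_unif (Finset.Icc 1 M) (fun n i => ‖T i (y n i)‖) (fun i hi => by
    obtain ⟨C, hC⟩ := hy_bdd i hi
    refine ⟨‖T i 0‖ + C, eventually_atTop.2 ⟨1, fun n hn => ?_⟩⟩
    have h1 := hFne i hi (y n i) 0
    rw [sub_zero] at h1
    have h2 := norm_le_norm_add_norm_sub (T i 0) (T i (y n i))
    have h3 := hC n hn
    rw [norm_sub_rev] at h2
    linarith)
  obtain ⟨Cu, hCu0, hCu⟩ := aux_unif (Finset.Icc 1 M) (fun _ i => ‖u i‖) (fun i _ =>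
    ⟨‖u i‖, Eventually.of_forall fun _ => le_rfl⟩)
  have hxb : ∀ᶠ n in atTop, ‖x (n + 1)‖ ≤ Cu + CT := by
    filter_upwards [hCT, hCu, eventually_ge_atTop 1] with n h1 h2 hn
    rw [hx n hn]
    refine havg _ _ fun i hi => ?_
    rw [hw n hn i hi]
    have hα := hα_range n
    refine (norm_add_le _ _).trans ?_
    rw [norm_smul, norm_smul, Real.norm_of_nonneg hα.1.le,
      Real.norm_of_nonneg (by linarith [hα.2] : 0 ≤ 1 - α n)]
    have h3 := mul_le_mul hα.2 (h2 i hi) (norm_nonneg _) zero_le_one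
    have h4 := mul_le_mul (by linarith [hα.1] : 1 - α n ≤ 1) (h1 i hi) (norm_nonneg _) zero_le_one
    linarith
  set Cx := Cu + CT with hCx
  have hCx0 : 0 ≤ Cx := by positivity
  have hxb' : ∀ᶠ n in atTop, ‖x n‖ ≤ Cx := by
    obtain ⟨N, hN⟩ := eventually_atTop.1 hxb
    refine eventually_atTop.2 ⟨N + 1, fun n hn => ?_⟩
    obtain ⟨m, rfl⟩ : ∃ m, n = m + 1 := ⟨n - 1, by omega⟩
    exact hN m (by omega)
  have hxbp : ∀ᶠ n in atTop, ‖x (n - 1)‖ ≤ Cx := (tendsto_sub_atTop_nat 1).eventually hxb'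
  have hzb : ∀ᶠ n in atTop, ‖z n‖ ≤ 3 * Cx := by
    filter_upwards [hxb', hxbp, eventually_ge_atTop 1] with n h1 h2 hn
    rw [hz n hn]
    refine (norm_add_le _ _).trans ?_
    rw [norm_smul, Real.norm_of_nonneg (hθ_range n).1]
    have h3 := norm_sub_le (x n) (x (n-1))
    have h4 := mul_le_mul (hθ_range n).2.le h3 (norm_nonneg _) zero_le_one
    linarith
  -- boundedness of d
  obtain ⟨Cd, hCd0, hCd⟩ := aux_unif (Finset.Icc 1 M) (fun n i => ‖d n i‖) (fun i hi => by
    have hβ2 : ∀ᶠ n in atTop, β n < 1 / 2 := hβ_lim.eventually (gt_mem_nhds (by norm_num))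
    obtain ⟨N, hN⟩ := eventually_atTop.1 ((hzb.and hβ2).and (eventually_ge_atTop 1))
    set G := ‖h' i 0‖ + (1 / L i) * (3 * Cx) with hG
    refine ⟨max ‖d N i‖ (2 * G), eventually_atTop.2 ⟨N, fun n hn => ?_⟩⟩
    induction n, hn using Nat.le_induction with
    | base => exact le_max_left _ _
    | succ n hn ih =>
      obtain ⟨⟨h1, h2⟩, h3⟩ := hN n hn
      rw [hd n h3 i hi]
      have h4 := hh_lip i hi (z n) 0
      rw [sub_zero] at h4
      have h5 := norm_le_norm_add_norm_sub (h' i 0) (h' i (z n))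
      rw [norm_sub_rev] at h5
      have h6 := mul_le_mul_of_nonneg_left h1 (by have := hL_pos i hi; positivity : 0 ≤ 1 / L i)
      have h7 := norm_add_le (-(h' i (z n))) (β n • d n i)
      rw [norm_neg, norm_smul, Real.norm_of_nonneg (hβ_range n).1.le] at h7
      have h8 := mul_le_mul h2.le ih (norm_nonneg _) (by norm_num)
      have h9 := le_max_right ‖d N i‖ (2 * G)
      linarith)
  set C := Cu + CT + Cy + 3 * Cx + Cd with hC
  have hC0 : 0 ≤ C := by positivity
  -- the key one-step estimate
  have hstep : ∀ᶠ n in atTop, ‖x (n+1+1) - x (n+1)‖ ≤ (1 - α (n+1)) * ‖x (n+1) - x n‖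
      + (4 * C * θ n + 2 * C * (lam (n+1) * β n) + 2 * C * (1 - lam (n+1) / lam n)
        + 2 * C * (α n - α (n+1))) := by
    have hxb1 := hxb
    have hd1' : ∀ᶠ n in atTop, ∀ i ∈ Finset.Icc 1 M, ‖d (n+1) i‖ ≤ Cd :=
      (tendsto_add_atTop_nat 1).eventually hCd
    filter_upwards [hCy, hCT, hCu, hxb1, hxb', hxbp, hzb, hCd, hd1', eventually_ge_atTop 1] with
      n ky kT ku kx1 kx kxp kz kd kd1 hn
    have hα' := hα_range (n+1)
    have hαm : α (n+1) ≤ α n := hα_anti (Nat.le_succ n)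
    have hθ' := hθ_range (n+1)
    have hθ0 := hθ_range n
    have hθm : θ (n+1) ≤ θ n := hθ_anti (Nat.le_succ n)
    have hβ' := hβ_range (n+1)
    have hβm : β (n+1) ≤ β n := hβ_anti (Nat.le_succ n)
    have hl' := hlam_pos (n+1)
    have hl0 := hlam_pos n
    have hlm : lam (n+1) ≤ lam n := hlam_anti (Nat.le_succ n)
    have hr1 : lam (n+1) / lam n ≤ 1 := (div_le_one hl0).2 hlm
    rw [hx (n+1) (by omega)]
    nth_rewrite 1 [hx n hn]
    rw [← smul_sub, ← Finset.sum_sub_distrib]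
    refine havg _ _ fun i hi => ?_
    -- z difference
    have hzz : ‖z (n+1) - z n‖ ≤ ‖x (n+1) - x n‖ + 4 * C * θ n := by
      rw [hz (n+1) (by omega), hz n hn, Nat.add_sub_cancel]
      have e : x (n+1) + θ (n+1) • (x (n+1) - x n) - (x n + θ n • (x n - x (n-1))) =
        (x (n+1) - x n) + θ (n+1) • (x (n+1) - x n) - θ n • (x n - x (n-1)) := by abel
      rw [e]
      refine (norm_sub_le _ _).trans ((add_le_add_left (norm_add_le _ _) _).trans ?_)
      rw [norm_smul, norm_smul, Real.norm_of_nonneg hθ'.1, Real.norm_of_nonneg hθ0.1]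
      have b1 : ‖x (n+1) - x n‖ ≤ 2 * C := by
        have := norm_sub_le (x (n+1)) (x n); linarith
      have b2 : ‖x n - x (n-1)‖ ≤ 2 * C := by
        have := norm_sub_le (x n) (x (n-1)); linarith
      have b3 := mul_le_mul hθm b1 (norm_nonneg _) hθ0.1
      have b4 := mul_le_mul_of_nonneg_left b2 hθ0.1
      linarith
    -- y difference
    have hyy : ‖y (n+1) i - y n i‖ ≤ ‖x (n+1) - x n‖ +
        (4 * C * θ n + 2 * C * (lam (n+1) * β n) + 2 * C * (1 - lam (n+1) / lam n)) := by
      refine (aux_prox2 (f i) (hf_conv i hi) (lam n) (lam (n+1)) hl0 hl' _ _ _ _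
        (hy n hn i hi) (hy (n+1) (by omega) i hi)).trans ?_
      have e : z (n+1) + lam (n+1) • d (n+1+1) i - (lam (n+1) / lam n) • (z n + lam n • d (n+1) i)
          - (1 - lam (n+1) / lam n) • y n i =
          ((z (n+1) - z n) - lam (n+1) • (h' i (z (n+1)) - h' i (z n)))
          + lam (n+1) • (β (n+1) • d (n+1) i - β n • d n i)
          + (1 - lam (n+1) / lam n) • (z n - y n i) := by
        have e1 : (lam (n+1) / lam n) • (z n + lam n • d (n+1) i) =
            (lam (n+1) / lam n) • z n + lam (n+1) • d (n+1) i := by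
          rw [smul_add, smul_smul, div_mul_cancel₀ _ hl0.ne']
        rw [e1, hd (n+1) (by omega) i hi]
        have e2 : lam (n+1) • d (n+1) i = lam (n+1) • (-(h' i (z n)) + β n • d n i) := by
          rw [hd n hn i hi]
        rw [e2]
        module
      rw [e]
      refine (norm_add_le _ _).trans ((add_le_add_left (norm_add_le _ _) _).trans ?_)
      have b1 := aux_nonexp (h i) (h' i) (L i) (hL_pos i hi) (hh_conv i hi) (hh_grad i hi)
        (hh_lip i hi) (lam (n+1)) hl' (hlam_le (n+1) i hi) (z (n+1)) (z n)
      have b2 : ‖lam (n+1) • (β (n+1) • d (n+1) i - β n • d n i)‖ ≤ 2 * C * (lam (n+1) * β n) := by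
        rw [norm_smul, Real.norm_of_nonneg hl'.le]
        have c1 := norm_sub_le (β (n+1) • d (n+1) i) (β n • d n i)
        rw [norm_smul, norm_smul, Real.norm_of_nonneg hβ'.1.le,
          Real.norm_of_nonneg (hβ_range n).1.le] at c1
        have c2 := mul_le_mul hβm ((kd1 i hi).trans (by linarith : Cd ≤ C)) (norm_nonneg _)
          (hβ_range n).1.le
        have c3 := mul_le_mul_of_nonneg_left ((kd i hi).trans (by linarith : Cd ≤ C))
          (hβ_range n).1.le
        have c4 := mul_le_mul_of_nonneg_left
          (by linarith : ‖β (n+1) • d (n+1) i - β n • d n i‖ ≤ 2 * (β n * C)) hl'.le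
        linarith
      have b3 : ‖(1 - lam (n+1) / lam n) • (z n - y n i)‖ ≤ 2 * C * (1 - lam (n+1) / lam n) := by
        rw [norm_smul, Real.norm_of_nonneg (by linarith)]
        have c1 := norm_sub_le (z n) (y n i)
        have c2 := ky i hi
        have c3 := mul_le_mul_of_nonneg_left (by linarith : ‖z n - y n i‖ ≤ 2 * C)
          (by linarith : 0 ≤ 1 - lam (n+1) / lam n)
        linarith
      linarith
    rw [hw (n+1) (by omega) i hi, hw n hn i hi]
    have e : α (n+1) • u i + (1 - α (n+1)) • T i (y (n+1) i) - (α n • u i + (1 - α n) • T i (y n i))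
        = (1 - α (n+1)) • (T i (y (n+1) i) - T i (y n i)) - (α n - α (n+1)) • (u i - T i (y n i)) := by
      module
    rw [e]
    refine (norm_sub_le _ _).trans ?_
    rw [norm_smul, norm_smul, Real.norm_of_nonneg (by linarith : 0 ≤ 1 - α (n+1)),
      Real.norm_of_nonneg (by linarith : 0 ≤ α n - α (n+1))]
    have b1 := (hFne i hi (y (n+1) i) (y n i)).trans hyy
    have b2 := mul_le_mul_of_nonneg_left b1 (by linarith : 0 ≤ 1 - α (n+1))
    have b3 : ‖u i - T i (y n i)‖ ≤ 2 * C := by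
      have c1 := norm_sub_le (u i) (T i (y n i))
      have c2 := ku i hi
      have c3 := kT i hi
      linarith
    have b4 := mul_le_mul_of_nonneg_left b3 (by linarith : 0 ≤ α n - α (n+1))
    have hE : 0 ≤ 4 * C * θ n + 2 * C * (lam (n+1) * β n) + 2 * C * (1 - lam (n+1) / lam n) := by
      have c1 : 0 ≤ 1 - lam (n+1) / lam n := by linarith
      have c2 := hθ0.1
      have c3 := (hβ_range n).1
      positivity
    have b5 := mul_nonneg hα'.1.le hE
    linarith
  have hmain : Tendsto (fun n => ‖x (n+1) - x n‖ / lam n) atTop (𝓝 0) := by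
    refine aux_xu _ α (fun n => 4 * C * (θ n / (α (n+1) * lam (n+1))) + 2 * C * (β n / α (n+1))
      + 4 * C * ((1 / α (n+1)) * |1 / lam (n+1) - 1 / lam n|)
      + 2 * C * ((1 / lam (n+1)) * |1 - α n / α (n+1)|))
      (fun n => div_nonneg (norm_nonneg _) (hlam_pos n).le) hα_range hC1 ?_ ?_
    · simpa using (((hC5.const_mul (4 * C)).add (hC7.const_mul (2 * C))).add
        (hC2.const_mul (4 * C))).add (hC3.const_mul (2 * C))
    · filter_upwards [hstep, hxb, hxb'] with n hs kx1 kx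
      have hα' := hα_range (n+1)
      have hαm : α (n+1) ≤ α n := hα_anti (Nat.le_succ n)
      have hl' := hlam_pos (n+1)
      have hl0 := hlam_pos n
      have hlm : lam (n+1) ≤ lam n := hlam_anti (Nat.le_succ n)
      have hinv : 0 ≤ 1 / lam (n+1) - 1 / lam n := by
        have := one_div_le_one_div_of_le hl' hlm; linarith
      have hrat : 1 - α n / α (n+1) ≤ 0 := by
        have := (one_le_div hα'.1).2 hαm; linarith
      rw [abs_of_nonneg hinv, abs_of_nonpos hrat]
      have b1 : ‖x (n+1) - x n‖ ≤ 2 * C := by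
        have := norm_sub_le (x (n+1)) (x n); linarith
      have b2 := mul_le_mul_of_nonneg_right b1 hinv
      have b3 : (1 - α (n+1)) * (‖x (n+1) - x n‖ * (1 / lam (n+1) - 1 / lam n)) ≤
          2 * C * (1 / lam (n+1) - 1 / lam n) := by
        have := mul_nonneg hα'.1.le (mul_nonneg (norm_nonneg (x (n+1) - x n)) hinv)
        linarith
      have hs2 := div_le_div_of_nonneg_right hs hl'.le
      refine hs2.trans ?_
      have hαne := hα'.1.ne'
      have e1 : ((1 - α (n+1)) * ‖x (n+1) - x n‖
          + (4 * C * θ n + 2 * C * (lam (n+1) * β n) + 2 * C * (1 - lam (n+1) / lam n)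
          + 2 * C * (α n - α (n+1)))) / lam (n+1) =
          (1 - α (n+1)) * (‖x (n+1) - x n‖ / lam n)
          + (1 - α (n+1)) * (‖x (n+1) - x n‖ * (1 / lam (n+1) - 1 / lam n))
          + (4 * C * (θ n / lam (n+1)) + 2 * C * β n + 2 * C * (1 / lam (n+1) - 1 / lam n)
          + 2 * C * ((α n - α (n+1)) / lam (n+1))) := by
        field_simp; ring
      have e2 : α (n+1) * (4 * C * (θ n / (α (n+1) * lam (n+1))) + 2 * C * (β n / α (n+1))
          + 4 * C * ((1 / α (n+1)) * (1 / lam (n+1) - 1 / lam n))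
          + 2 * C * ((1 / lam (n+1)) * -(1 - α n / α (n+1)))) =
          4 * C * (θ n / lam (n+1)) + 2 * C * β n + 4 * C * (1 / lam (n+1) - 1 / lam n)
          + 2 * C * ((α n - α (n+1)) / lam (n+1)) := by
        field_simp; ring
      rw [e1, e2]
      linarith
  refine ⟨hmain, ?_⟩
  have := hmain.mul hlam_lim
  rw [mul_zero] at this
  refine this.congr fun n => ?_
  exact div_mul_cancel₀ _ (hlam_pos n).ne'
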